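/- (Generalized quantum Capelli identity, skew-symmetric form.) Let R be a skew-invertible Hecke symmetry with parameter q such that j_q ≠ 0 for 2 ≤ j ≤ k, let M and D be N×N matrices with entries in a unital associative ℂ-algebra 𝒜 satisfying the Reflection Equation R M₁ R M₁ = M₁ R M₁ R, the relation R⁻¹ D₁ R⁻¹ D₁ = D₁ R⁻¹ D₁ R⁻¹, and the permutation relations D₁ R M₁ = R M₁ R⁻¹ D₁ R⁻¹ + I, and set L := M D. Then for every k ≥ 1, as an identity in 𝒜: ⟨A^(k) L_{1̄} (L_{2̄} + q·I) ⋯ (L_{k̄} + q^{k−1}·(k−1)_q·I)⟩_{1…k} = q^{k(k−1)} ⟨A^(k) M_{1̄} ⋯ M_{k̄} D_{k̄} ⋯ D_{1̄}⟩_{1…k}. -/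

import Mathlib

open Matrix BigOperators

noncomputable section

/-- An `N² × N²` complex matrix, viewed as an operator on `ℂ^N ⊗ ℂ^N`. -/
abbrev RMat (N : ℕ) := Matrix (Fin N × Fin N) (Fin N × Fin N) ℂ

/-- A matrix on the `k`-th tensor power of `ℂ^N`, with entries in `A`. -/
abbrev TMat (N k : ℕ) (A : Type _) := Matrix (Fin k → Fin N) (Fin k → Fin N) A

/-- The `q`-number `j_q = (q^j - q^{-j})/(q - q^{-1})`. -/
def qNum (q : ℂ) (j : ℕ) : ℂ := (q ^ j - q⁻¹ ^ j) / (q - q⁻¹)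

/-- Embedding of an `N²×N²` matrix `R` into the `k`-th tensor power,
acting in the (0-based) tensor factors `i` and `i+1`.  The paper's `R_i`
(1-based) is `embR k R (i-1)`. -/
def embR {N : ℕ} (k : ℕ) (R : RMat N) (i : ℕ) : TMat N k ℂ := fun f g =>
  if h : i + 1 < k then
    if ∀ j : Fin k, j.val ≠ i → j.val ≠ i + 1 → f j = g j then
      R (f ⟨i, Nat.lt_of_succ_lt h⟩, f ⟨i + 1, h⟩) (g ⟨i, Nat.lt_of_succ_lt h⟩, g ⟨i + 1, h⟩)
    else 0
  else (1 : TMat N k ℂ) f g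

/-- `X ⊗ I^{⊗(k-1)}` : the first copy `X_{1̄}` of an `N×N` matrix over `A`. -/
def emb1 {N : ℕ} (k : ℕ) {A : Type _} [Ring A] (X : Matrix (Fin N) (Fin N) A) :
    TMat N k A := fun f g =>
  if h : 0 < k then
    if ∀ j : Fin k, j.val ≠ 0 → f j = g j then X (f ⟨0, h⟩) (g ⟨0, h⟩) else 0
  else (1 : TMat N k A) f g

/-- Lift a complex matrix to a matrix over the `ℂ`-algebra `A`. -/
def liftC {N k : ℕ} (A : Type _) [Ring A] [Algebra ℂ A] (X : TMat N k ℂ) : TMat N k A :=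
  X.map (algebraMap ℂ A)

/-- The copies `X_{1̄}, X_{2̄}, …` of `X` in the `k`-th tensor power:
`copyX k R Rinv X i` is the paper's `X_{\overline{i+1}}`, i.e.
`X_{1̄} = X ⊗ I^{⊗(k-1)}` and `X_{\overline{i+1}} = R_i X_{ī} R_i⁻¹`. -/
def copyX {N : ℕ} (k : ℕ) (R Rinv : RMat N) {A : Type _} [Ring A] [Algebra ℂ A]
    (X : Matrix (Fin N) (Fin N) A) : ℕ → TMat N k A
  | 0 => emb1 k X
  | i + 1 => liftC A (embR k R i) * copyX k R Rinv X i * liftC A (embR k Rinv i)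

/-- The `R`-skew-symmetrizers, on the ambient `k`-th tensor power:
`Asym k R q j` is `A^{(j)}` (acting in the first `j` factors). -/
def Asym {N : ℕ} (k : ℕ) (R : RMat N) (q : ℂ) : ℕ → TMat N k ℂ
  | 0 => 1
  | 1 => 1
  | j + 2 =>
      (qNum q (j + 2))⁻¹ •
        (Asym k R q (j + 1) *
          ((q ^ (j + 1)) • (1 : TMat N k ℂ) - (qNum q (j + 1)) • embR k R j) *
          Asym k R q (j + 1))

/-- The `R`-symmetrizers, on the ambient `k`-th tensor power:
`Ssym k R q j` is `S^{(j)}` (acting in the first `j` factors). -/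
def Ssym {N : ℕ} (k : ℕ) (R : RMat N) (q : ℂ) : ℕ → TMat N k ℂ
  | 0 => 1
  | 1 => 1
  | j + 2 =>
      (qNum q (j + 2))⁻¹ •
        (Ssym k R q (j + 1) *
          ((q⁻¹ ^ (j + 1)) • (1 : TMat N k ℂ) + (qNum q (j + 1)) • embR k R j) *
          Ssym k R q (j + 1))

/-- The braid relation `R₁₂ R₂₃ R₁₂ = R₂₃ R₁₂ R₂₃` on `(ℂ^N)^{⊗3}`. -/
def IsBraiding {N : ℕ} (R : RMat N) : Prop :=
  embR 3 R 0 * embR 3 R 1 * embR 3 R 0 = embR 3 R 1 * embR 3 R 0 * embR 3 R 1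

/-- The Hecke condition `(q·I − R)(q⁻¹·I + R) = 0`. -/
def HeckeCond {N : ℕ} (R : RMat N) (q : ℂ) : Prop :=
  (q • (1 : RMat N) - R) * (q⁻¹ • (1 : RMat N) + R) = 0

/-- The Reflection Equation `R M₁ R M₁ = M₁ R M₁ R` (on `(ℂ^N)^{⊗2}`,
with entries in `A`). -/
def RERel {N : ℕ} (R : RMat N) {A : Type _} [Ring A] [Algebra ℂ A]
    (M : Matrix (Fin N) (Fin N) A) : Prop :=
  liftC A (embR 2 R 0) * emb1 2 M * liftC A (embR 2 R 0) * emb1 2 M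
    = emb1 2 M * liftC A (embR 2 R 0) * emb1 2 M * liftC A (embR 2 R 0)

/-- The relation `R⁻¹ D₁ R⁻¹ D₁ = D₁ R⁻¹ D₁ R⁻¹` on the matrix `D`,
where `Rinv = R⁻¹`. -/
def DDRel {N : ℕ} (Rinv : RMat N) {A : Type _} [Ring A] [Algebra ℂ A]
    (D : Matrix (Fin N) (Fin N) A) : Prop :=
  liftC A (embR 2 Rinv 0) * emb1 2 D * liftC A (embR 2 Rinv 0) * emb1 2 D
    = emb1 2 D * liftC A (embR 2 Rinv 0) * emb1 2 D * liftC A (embR 2 Rinv 0)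

/-- The permutation relations `D₁ R M₁ = R M₁ R⁻¹ D₁ R⁻¹ + I`, where `Rinv = R⁻¹`. -/
def PermRel {N : ℕ} (R Rinv : RMat N) {A : Type _} [Ring A] [Algebra ℂ A]
    (M D : Matrix (Fin N) (Fin N) A) : Prop :=
  emb1 2 D * liftC A (embR 2 R 0) * emb1 2 M
    = liftC A (embR 2 R 0) * emb1 2 M * liftC A (embR 2 Rinv 0) * emb1 2 D *
        liftC A (embR 2 Rinv 0) + 1

/-- `Ψ` is the skew-inverse of `R`:  `Σ_{j,b} R^{ij}_{ab} Ψ^{bc}_{jd} = δ^i_d δ^c_a`. -/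
def SkewInv {N : ℕ} (R Ψ : RMat N) : Prop :=
  ∀ i a c d : Fin N,
    (∑ j : Fin N, ∑ b : Fin N, R (i, j) (a, b) * Ψ (b, c) (j, d))
      = if i = d ∧ c = a then 1 else 0

/-- The matrix `C`, `C^c_d = Σ_i Ψ^{ic}_{id}`. -/
def Cmat {N : ℕ} (Ψ : RMat N) : Matrix (Fin N) (Fin N) ℂ :=
  fun c d => ∑ i : Fin N, Ψ (i, c) (i, d)

/-- The `R`-trace over all `k` tensor factors: `⟨X⟩_{1…k} = Tr(C^{⊗k} X)`. -/
def rTr {N k : ℕ} {A : Type _} [Ring A] [Algebra ℂ A] (C : Matrix (Fin N) (Fin N) ℂ)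
    (X : TMat N k A) : A :=
  ∑ f : Fin k → Fin N, ∑ g : Fin k → Fin N, (∏ j : Fin k, C (f j) (g j)) • X g f

/-- The chain `X_{1̄} X_{2̄} ⋯ X_{n̄}`. -/
def upChain {N : ℕ} (k : ℕ) (R Rinv : RMat N) {A : Type _} [Ring A] [Algebra ℂ A]
    (X : Matrix (Fin N) (Fin N) A) (n : ℕ) : TMat N k A :=
  ((List.range n).map (copyX k R Rinv X)).prod

/-- The reversed chain `X_{n̄} X_{\overline{n-1}} ⋯ X_{1̄}`. -/
def downChain {N : ℕ} (k : ℕ) (R Rinv : RMat N) {A : Type _} [Ring A] [Algebra ℂ A]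
    (X : Matrix (Fin N) (Fin N) A) (n : ℕ) : TMat N k A :=
  ((List.range n).reverse.map (copyX k R Rinv X)).prod

/-- The Capelli chain `L_{1̄}(L_{2̄} + q·1_q I)(L_{3̄} + q²·2_q I) ⋯ (L_{n̄} + q^{n-1}·(n-1)_q I)`
(note `0_q = 0`). -/
def capChainA {N : ℕ} (k : ℕ) (R Rinv : RMat N) (q : ℂ) {A : Type _} [Ring A] [Algebra ℂ A]
    (L : Matrix (Fin N) (Fin N) A) (n : ℕ) : TMat N k A :=
  ((List.range n).map
    (fun i => copyX k R Rinv L i + ((q ^ i) * qNum q i) • (1 : TMat N k A))).prod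

/-- The symmetric Capelli chain
`L_{1̄}(L_{2̄} - q⁻¹·1_q I) ⋯ (L_{n̄} - q^{-(n-1)}·(n-1)_q I)`. -/
def capChainS {N : ℕ} (k : ℕ) (R Rinv : RMat N) (q : ℂ) {A : Type _} [Ring A] [Algebra ℂ A]
    (L : Matrix (Fin N) (Fin N) A) (n : ℕ) : TMat N k A :=
  ((List.range n).map
    (fun i => copyX k R Rinv L i - ((q⁻¹ ^ i) * qNum q i) • (1 : TMat N k A))).prod

/-- The descending chain `R_{a→b} = R_a R_{a-1} ⋯ R_b` (1-based indices;
identity when `b > a`). -/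
def rChainDesc {N : ℕ} (k : ℕ) (R : RMat N) (a b : ℕ) : TMat N k ℂ :=
  ((List.range' b (a + 1 - b)).reverse.map (fun j => embR k R (j - 1))).prod

/-- The ascending chain `R_{b→a} = R_b R_{b+1} ⋯ R_a` (1-based indices;
identity when `b > a`). -/
def rChainAsc {N : ℕ} (k : ℕ) (R : RMat N) (b a : ℕ) : TMat N k ℂ :=
  ((List.range' b (a + 1 - b)).map (fun j => embR k R (j - 1))).prod

/-! The skew-symmetrizer `A^(k)` satisfies `R_i A^(k) = -q⁻¹ A^(k)`, so next to it every `R_i` turns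
into a scalar. For this reason the identity already holds before taking traces, in the form
`L₁ (L₂ + q) ⋯ (L_k + q^(k-1) (k-1)_q) A^(k) = q^(k(k-1)) M₁ ⋯ M_k D_k ⋯ D₁ A^(k)`,
and for any `y` with `R_i y = -q⁻¹ y` in place of `A^(k)`. By induction on `k` it comes down to
moving `D_n ⋯ D₁` through the factor `L_{n+1} + q^n n_q`: the permutation relation carries `M_n`
past `D_n R_n` at the cost of a constant, and the constants accumulated in this way are cancelled by
`q^n n_q`, which is the sum of `q^(2i+1)` over `i < n`. The relation for `D` makes `D_n ⋯ D₁`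
commute with `R_1, …, R_{n-1}`, so that `D_n ⋯ D₁ y` is again an eigenvector.

It remains to move `A^(k)` across the `R`-trace, that is, to show that `C ⊗ C` commutes with `R`.
In the braid relation, rewritten as `R₁₂ R₂₃ R₁₂⁻¹ = R₂₃⁻¹ R₁₂ R₂₃`, the trace against `C` over the
first factor turns the right-hand side into the identity. Contracting the third factor of the
left-hand side with `Ψ` then gives `C₁ Ψ = (P R⁻¹ P) C₂`, where `P` is the flip. The transposed
relations give `Ψ C₁ = C₂ (P R⁻¹ P)`, and computing `C₁ Ψ C₁` in both ways shows that `C ⊗ C`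
commutes with `P R⁻¹ P`. -/

/-- The Artin relations of the braid group on `k` strands, for `r 0, …, r (k - 2)`. The sequence is
indexed by all of `ℕ`, with no condition on the entries beyond `k - 2`. -/
structure IsBraidSequence {G : Type*} [Mul G] (r : ℕ → G) (k : ℕ) : Prop where
  braid : ∀ i, i + 2 < k → r i * r (i + 1) * r i = r (i + 1) * r i * r (i + 1)
  comm : ∀ i j, i + 2 ≤ j → j + 1 < k → Commute (r i) (r j)

namespace IsBraidSequence

lemma map {G H F : Type*} [Mul G] [Mul H] [FunLike F G H] [MulHomClass F G H] {r : ℕ → G} {k : ℕ}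
    (hr : IsBraidSequence r k) (f : F) : IsBraidSequence (fun i => f (r i)) k where
  braid i hi := by simp only [← map_mul, hr.braid i hi]
  comm i j hij hj := (hr.comm i j hij hj).map f

lemma of_units_val {B : Type*} [Monoid B] {r : ℕ → Bˣ} {k : ℕ}
    (hr : IsBraidSequence (fun i => (r i : B)) k) : IsBraidSequence r k where
  braid i hi := Units.ext (hr.braid i hi)
  comm i j hij hj := Units.ext (hr.comm i j hij hj)

variable {G : Type*} [Group G] {r : ℕ → G} {k : ℕ}

lemma conj_succ (hr : IsBraidSequence r k) {i : ℕ} (hi : i + 2 < k) :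
    r (i + 1) * r i * r (i + 1) * (r (i + 1) * r i)⁻¹ = r i := by
  rw [← hr.braid i hi]; group

lemma conj_self (hr : IsBraidSequence r k) {i : ℕ} (hi : i + 2 < k) :
    r i * r (i + 1) * r i * (r i * r (i + 1))⁻¹ = r (i + 1) := by
  rw [hr.braid i hi]; group

end IsBraidSequence

/-- The product `f 0 * f 1 * ⋯ * f (n - 1)`. -/
def ascProd {B : Type*} [Monoid B] (f : ℕ → B) (n : ℕ) : B := ((List.range n).map f).prod

/-- The product `f (n - 1) * ⋯ * f 1 * f 0`. -/
def descProd {B : Type*} [Monoid B] (f : ℕ → B) (n : ℕ) : B := ((List.range n).reverse.map f).prod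

section Products

variable {B : Type*} [Monoid B] (f : ℕ → B)

@[simp] lemma ascProd_zero : ascProd f 0 = 1 := rfl

@[simp] lemma descProd_zero : descProd f 0 = 1 := rfl

lemma ascProd_succ (n : ℕ) : ascProd f (n + 1) = ascProd f n * f n := List.prod_range_succ f n

lemma descProd_succ (n : ℕ) : descProd f (n + 1) = f n * descProd f n := by
  simp only [descProd, List.range_succ, List.reverse_append, List.reverse_singleton,
    List.singleton_append, List.map_cons, List.prod_cons]

end Products

/-- The copies `x`, `r₀ x r₀⁻¹`, `r₁ r₀ x r₀⁻¹ r₁⁻¹`, … of `x`; the paper writes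
`x_{\overline{i+1}}` for `braidCopy r x i`. -/
def braidCopy {B : Type*} [Monoid B] (r : ℕ → Bˣ) (x : B) : ℕ → B
  | 0 => x
  | i + 1 => ConjAct.toConjAct (r i) • braidCopy r x i

section BraidCopy

variable {B : Type*} [Monoid B] {r : ℕ → Bˣ} {k : ℕ}

lemma conj_eq_self_of_commute {u : Bˣ} {x : B} (h : Commute (u : B) x) :
    ConjAct.toConjAct u • x = x := by
  rw [ConjAct.units_smul_def, ConjAct.ofConjAct_toConjAct, h.eq, Units.mul_inv_cancel_right]

lemma commute_conj {x y : B} (h : Commute x y) (u : Bˣ) :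
    Commute (ConjAct.toConjAct u • x) (ConjAct.toConjAct u • y) :=
  h.map (MulDistribMulAction.toMonoidHom B (ConjAct.toConjAct u))

lemma conj_units (u v : Bˣ) :
    ConjAct.toConjAct u • (v : B) = (u * v * u⁻¹ : Bˣ) := by
  simp [ConjAct.units_smul_def]

lemma braidCopy_succ_eq (r : ℕ → Bˣ) (x : B) (i : ℕ) :
    braidCopy r x (i + 1) = r i * braidCopy r x i * ↑(r i)⁻¹ := rfl

lemma braidCopy_mul (r : ℕ → Bˣ) (x y : B) (i : ℕ) :
    braidCopy r (x * y) i = braidCopy r x i * braidCopy r y i := by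
  induction i with
  | zero => rfl
  | succ i ih => simp only [braidCopy, ih, smul_mul']

/-- `x` acts on the first strand only: it commutes with every generator `r i` not involving it. -/
def IsFirstStrand (r : ℕ → Bˣ) (k : ℕ) (x : B) : Prop :=
  ∀ i, 1 ≤ i → i + 1 < k → Commute (r i : B) x

variable {x y : B}

lemma IsFirstStrand.mul (hx : IsFirstStrand r k x) (hy : IsFirstStrand r k y) :
    IsFirstStrand r k (x * y) :=
  fun i hi hik => (hx i hi hik).mul_right (hy i hi hik)

lemma commute_braidCopy_of_lt (hr : IsBraidSequence r k) (hx : IsFirstStrand r k x) {i j : ℕ}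
    (hji : j < i) (hi : i + 1 < k) : Commute (r i : B) (braidCopy r x j) := by
  induction j with
  | zero => exact hx i hji hi
  | succ j ih =>
    have hcomm : Commute (r i : B) (r j) := (hr.comm j i (by lia) hi).symm.map (Units.coeHom B)
    rw [braidCopy_succ_eq]
    exact (hcomm.mul_right (ih (by lia))).mul_right hcomm.units_inv_right

lemma braidCopy_succ_eq_conj (hr : IsBraidSequence r k) (hx : IsFirstStrand r k x) {j : ℕ}
    (hj : j + 2 < k) :
    braidCopy r x (j + 1) = ConjAct.toConjAct (r j * r (j + 1)) • braidCopy r x j := by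
  rw [ConjAct.toConjAct_mul, mul_smul,
    conj_eq_self_of_commute (commute_braidCopy_of_lt hr hx j.lt_succ_self hj), braidCopy]

lemma commute_braidCopy_of_add_two_le (hr : IsBraidSequence r k) (hx : IsFirstStrand r k x)
    {i j : ℕ} (hij : i + 2 ≤ j) (hj : j < k) : Commute (r i : B) (braidCopy r x j) := by
  induction j, hij using Nat.le_induction with
  | base =>
    have hcomm := commute_conj (commute_braidCopy_of_lt hr hx i.lt_succ_self hj) (r (i + 1) * r i)
    rwa [conj_units, hr.conj_succ hj, ConjAct.toConjAct_mul, mul_smul] at hcomm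
  | succ j hij ih =>
    have hcomm : Commute (r i : B) (r j) := (hr.comm i j hij (by lia)).map (Units.coeHom B)
    rw [braidCopy_succ_eq]
    exact (hcomm.mul_right (ih (by lia))).mul_right hcomm.units_inv_right

lemma braidCopy_add_two_eq_conj (hr : IsBraidSequence r k) (hx : IsFirstStrand r k x) {j : ℕ}
    (hj : j + 2 < k) :
    braidCopy r x (j + 2) = ConjAct.toConjAct (r j * r (j + 1)) • braidCopy r x (j + 1) := by
  have hcomm : r (j + 1) * (r j * r (j + 1)) = r j * r (j + 1) * r j := by
    rw [hr.braid j hj, mul_assoc]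
  calc braidCopy r x (j + 2)
      = ConjAct.toConjAct (r (j + 1)) • braidCopy r x (j + 1) := rfl
    _ = ConjAct.toConjAct (r j * r (j + 1)) • ConjAct.toConjAct (r j) • braidCopy r x j := by
      rw [braidCopy_succ_eq_conj hr hx hj, smul_smul, smul_smul, ← ConjAct.toConjAct_mul, hcomm,
        ConjAct.toConjAct_mul]

lemma commute_descProd_braidCopy_of_le (hr : IsBraidSequence r k) (hx : IsFirstStrand r k x)
    {n i : ℕ} (hni : n ≤ i) (hi : i + 1 < k) :
    Commute (r i : B) (descProd (braidCopy r x) n) := by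
  induction n with
  | zero => exact Commute.one_right _
  | succ n ih =>
    rw [descProd_succ]
    exact (commute_braidCopy_of_lt hr hx hni hi).mul_right (ih (by lia))

lemma commute_braidCopy_succ_mul (hr : IsBraidSequence r k) (hx : IsFirstStrand r k x)
    (hxx : 1 < k → Commute (r 0 : B) (braidCopy r x 1 * x)) {j : ℕ} (hj : j + 1 < k) :
    Commute (r j : B) (braidCopy r x (j + 1) * braidCopy r x j) := by
  induction j with
  | zero => exact hxx hj
  | succ j ih =>
    have hcomm := commute_conj (ih (by lia)) (r j * r (j + 1))
    rwa [smul_mul', conj_units, hr.conj_self hj, ← braidCopy_add_two_eq_conj hr hx hj,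
      ← braidCopy_succ_eq_conj hr hx hj] at hcomm

lemma commute_descProd_braidCopy_of_add_two_le (hr : IsBraidSequence r k)
    (hx : IsFirstStrand r k x) (hxx : 1 < k → Commute (r 0 : B) (braidCopy r x 1 * x))
    {i n : ℕ} (hin : i + 2 ≤ n) (hn : n ≤ k) : Commute (r i : B) (descProd (braidCopy r x) n) := by
  induction n, hin using Nat.le_induction with
  | base =>
    rw [descProd_succ, descProd_succ, ← mul_assoc]
    exact (commute_braidCopy_succ_mul hr hx hxx hn).mul_right
      (commute_descProd_braidCopy_of_le hr hx le_rfl hn)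
  | succ n hin ih =>
    rw [descProd_succ]
    exact (commute_braidCopy_of_add_two_le hr hx hin hn).mul_right (ih (by lia))

end BraidCopy

lemma braidCopy_perm_rel {B : Type*} [Ring B] {r : ℕ → Bˣ} {k : ℕ} {x y : B}
    (hr : IsBraidSequence r k) (hx : IsFirstStrand r k x) (hy : IsFirstStrand r k y)
    (hxy : 1 < k → y * r 0 * x = braidCopy r x 1 * y * ↑(r 0)⁻¹ + 1) {j : ℕ} (hj : j + 1 < k) :
    braidCopy r y j * r j * braidCopy r x j =
      braidCopy r x (j + 1) * braidCopy r y j * ↑(r j)⁻¹ + 1 := by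
  induction j with
  | zero => exact hxy hj
  | succ j ih =>
    have hconj := congrArg (ConjAct.toConjAct (r j * r (j + 1)) • ·) (ih (by lia))
    simpa only [smul_mul', smul_add, smul_one, conj_units, ← conj_inv, hr.conj_self hj,
      ← braidCopy_add_two_eq_conj hr hx hj, ← braidCopy_succ_eq_conj hr hx hj,
      ← braidCopy_succ_eq_conj hr hy hj] using hconj

/-- `y` is a joint left eigenvector, with eigenvalue `-q⁻¹`, of the generators acting on the first
`n` strands. -/
def IsSkew {𝕜 B : Type*} [Field 𝕜] [Ring B] [Algebra 𝕜 B] (r : ℕ → B) (q : 𝕜) (n : ℕ) (y : B) :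
    Prop :=
  ∀ i, i + 1 < n → r i * y = (-q⁻¹) • y

/-- Abstracts the matrices `M₁` and `D₁`: elements `m` and `d` of the first strand subject to the
permutation relations and to the reflection equation of `D`, the latter rewritten as a commutation
relation. Both relations involve the second strand, so they are void if there is none. -/
structure IsCapelliPair {B : Type*} [Ring B] (r : ℕ → Bˣ) (k : ℕ) (m d : B) : Prop where
  left_isFirstStrand : IsFirstStrand r k m
  right_isFirstStrand : IsFirstStrand r k d
  perm_rel : 1 < k → d * r 0 * m = braidCopy r m 1 * d * ↑(r 0)⁻¹ + 1
  right_commute : 1 < k → Commute (r 0 : B) (braidCopy r d 1 * d)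

section Capelli

variable {𝕜 B : Type*} [Field 𝕜] [Ring B] [Algebra 𝕜 B] {r : ℕ → Bˣ} {q : 𝕜} {k n : ℕ} {m d y : B}

lemma IsSkew.inv_mul (hq : q ≠ 0) (hy : IsSkew (fun i => (r i : B)) q n y) {i : ℕ}
    (hi : i + 1 < n) : ↑(r i)⁻¹ * y = (-q) • y := by
  rw [Units.inv_mul_eq_iff_eq_mul, mul_smul_comm, hy i hi, smul_smul, neg_mul_neg,
    mul_inv_cancel₀ hq, one_smul]

lemma IsSkew.of_commute_mul {b : B} (hy : IsSkew (fun i => (r i : B)) q n y)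
    (hb : ∀ i, i + 1 < n → Commute (r i : B) b) : IsSkew (fun i => (r i : B)) q n (b * y) :=
  fun i hi => by rw [← mul_assoc, (hb i hi).eq, mul_assoc, hy i hi, mul_smul_comm]

lemma descProd_succ_mul_braidCopy_succ_mul (hq : q ≠ 0) (hr : IsBraidSequence r k)
    (hd : IsFirstStrand r k d) (hn : n + 1 < k) (hy : IsSkew (fun i => (r i : B)) q (n + 2) y) :
    descProd (braidCopy r d) (n + 1) * (braidCopy r m (n + 1) * (braidCopy r d (n + 1) * y)) =
      (-q) • (braidCopy r d n * (r n *
        (descProd (braidCopy r d) n * (braidCopy r m n * (braidCopy r d n * y))))) := by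
  have hcomm := commute_descProd_braidCopy_of_le hr hd le_rfl hn
  calc _ = braidCopy r d n * (descProd (braidCopy r d) n * r n *
        (braidCopy r m n * (braidCopy r d n * (↑(r n)⁻¹ * y)))) := by
        simp only [descProd_succ, braidCopy_succ_eq, mul_assoc, Units.inv_mul_cancel_left]
    _ = _ := by
        rw [← hcomm.eq, hy.inv_mul hq (by lia)]
        simp only [mul_smul_comm, mul_assoc]

lemma braidCopy_mul_inv_mul_descProd_succ_mul (hq : q ≠ 0) (hr : IsBraidSequence r k)
    (hd : IsFirstStrand r k d) (hdd : 1 < k → Commute (r 0 : B) (braidCopy r d 1 * d))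
    (hn : n + 1 < k) (hy : IsSkew (fun i => (r i : B)) q (n + 2) y) :
    braidCopy r d n * (↑(r n)⁻¹ * (descProd (braidCopy r d) (n + 1) * y)) =
      (-q) • (descProd (braidCopy r d) (n + 2) * y) := by
  have hskew : IsSkew (fun i => (r i : B)) q (n + 2) (descProd (braidCopy r d) (n + 2) * y) :=
    hy.of_commute_mul fun i hi =>
      commute_descProd_braidCopy_of_add_two_le hr hd hdd (by lia) (by lia)
  rw [← hskew.inv_mul hq (by lia : n + 1 < n + 2), descProd_succ _ (n + 1), braidCopy_succ_eq]
  simp only [mul_assoc, Units.inv_mul_cancel_left]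

lemma braidCopy_mul_mul_descProd_mul (hr : IsBraidSequence r k) (hd : IsFirstStrand r k d)
    (hn : n + 1 < k) (hy : IsSkew (fun i => (r i : B)) q (n + 2) y) :
    braidCopy r d n * (r n * (descProd (braidCopy r d) n * y)) =
      (-q⁻¹) • (descProd (braidCopy r d) (n + 1) * y) := by
  have hcomm := commute_descProd_braidCopy_of_le hr hd le_rfl hn
  rw [← mul_assoc (r n : B), hcomm.eq, mul_assoc, hy n (by lia), mul_smul_comm, mul_smul_comm,
    descProd_succ, mul_assoc]

lemma descProd_mul_capelli_factor_mul (hq : q ≠ 0) (hr : IsBraidSequence r k)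
    (hmd : IsCapelliPair r k m d) (hn : n < k)
    (hy : IsSkew (fun i => (r i : B)) q (n + 1) y) :
    descProd (braidCopy r d) n *
        ((braidCopy r (m * d) n + (∑ i ∈ Finset.range n, q ^ (2 * i + 1)) • 1) * y) =
      q ^ (2 * n) • (braidCopy r m n * descProd (braidCopy r d) (n + 1) * y) := by
  induction n with
  | zero => simp [descProd_succ, braidCopy]
  | succ n ih =>
    have hm := hmd.left_isFirstStrand
    have hd := hmd.right_isFirstStrand
    set c := ∑ i ∈ Finset.range n, q ^ (2 * i + 1)
    set D := braidCopy r d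
    set M := braidCopy r m
    set P := descProd D
    have ih' : P n * (M n * (D n * y)) = q ^ (2 * n) • (M n * (P (n + 1) * y)) - c • (P n * y) := by
      have hn' := ih (by lia) fun i hi => hy i (by lia)
      rw [braidCopy_mul, add_mul, mul_add, smul_one_mul, mul_smul_comm, mul_assoc, mul_assoc] at hn'
      exact eq_sub_of_add_eq hn'
    have hMr : ∀ z, D n * (r n * (M n * z)) = M (n + 1) * (D n * (↑(r n)⁻¹ * z)) + z := fun z => by
      simpa only [add_mul, mul_assoc, one_mul] using
        congrArg (· * z) (braidCopy_perm_rel hr hm hd hmd.perm_rel hn)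
    calc P (n + 1) * ((braidCopy r (m * d) (n + 1) +
            (∑ i ∈ Finset.range (n + 1), q ^ (2 * i + 1)) • 1) * y)
        = P (n + 1) * (M (n + 1) * (D (n + 1) * y)) + (c + q ^ (2 * n + 1)) • (P (n + 1) * y) := by
          rw [braidCopy_mul, Finset.sum_range_succ, add_mul, mul_add, smul_one_mul, mul_smul_comm,
            mul_assoc]
      _ = (-q) • (D n * (r n * (q ^ (2 * n) • (M n * (P (n + 1) * y)) - c • (P n * y)))) +
            (c + q ^ (2 * n + 1)) • (P (n + 1) * y) := by
          rw [descProd_succ_mul_braidCopy_succ_mul hq hr hd hn hy, ih']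
      _ = (-q) • (q ^ (2 * n) • (M (n + 1) * ((-q) • (P (n + 2) * y)) + P (n + 1) * y) -
            c • ((-q⁻¹) • (P (n + 1) * y))) + (c + q ^ (2 * n + 1)) • (P (n + 1) * y) := by
          simp only [mul_sub, mul_smul_comm, hMr,
            braidCopy_mul_inv_mul_descProd_succ_mul hq hr hd hmd.right_commute hn hy,
            braidCopy_mul_mul_descProd_mul hr hd hn hy, D, P]
      _ = q ^ (2 * (n + 1)) • (M (n + 1) * P (n + 2) * y) := by
          rw [mul_smul_comm, ← mul_assoc]
          match_scalars <;> field_simp <;> ring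

theorem capelli_mul_of_isSkew (hq : q ≠ 0) (hr : IsBraidSequence r k)
    (hmd : IsCapelliPair r k m d) (hn : n ≤ k)
    (hy : IsSkew (fun i => (r i : B)) q n y) :
    ascProd (fun i => braidCopy r (m * d) i + (∑ j ∈ Finset.range i, q ^ (2 * j + 1)) • 1) n * y =
      q ^ (n * (n - 1)) • (ascProd (braidCopy r m) n * descProd (braidCopy r d) n * y) := by
  induction n generalizing y with
  | zero => simp
  | succ n ih =>
    set factor := fun i => braidCopy r (m * d) i + (∑ j ∈ Finset.range i, q ^ (2 * j + 1)) • (1 : B)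
    have hfactor : ∀ i, i + 1 < n → Commute (r i : B) (factor n) := fun i hi =>
      (commute_braidCopy_of_add_two_le hr (hmd.left_isFirstStrand.mul hmd.right_isFirstStrand)
        hi hn).add_right ((Commute.one_right _).smul_right _)
    have hskew : IsSkew (fun i => (r i : B)) q n (factor n * y) :=
      IsSkew.of_commute_mul (fun i hi => hy i (by lia)) hfactor
    calc ascProd factor (n + 1) * y
        = q ^ (n * (n - 1)) •
            (ascProd (braidCopy r m) n * (descProd (braidCopy r d) n * (factor n * y))) := by
          rw [ascProd_succ, mul_assoc, ih (by lia) hskew, mul_assoc]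
      _ = q ^ (n * (n - 1) + 2 * n) •
            (ascProd (braidCopy r m) (n + 1) * descProd (braidCopy r d) (n + 1) * y) := by
          rw [descProd_mul_capelli_factor_mul hq hr hmd hn hy, mul_smul_comm, smul_smul,
            ← pow_add, ascProd_succ]
          simp only [mul_assoc]
      _ = _ := by
          congr 2
          cases n with
          | zero => rfl
          | succ n => simp only [Nat.add_sub_cancel]; ring

end Capelli

section QNumbers

variable {q : ℂ}

lemma sub_inv_ne_zero_of_ne_one (hq0 : q ≠ 0) (hq1 : q ≠ 1) (hqm1 : q ≠ -1) : q - q⁻¹ ≠ 0 := by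
  rw [sub_ne_zero, Ne, ← mul_eq_one_iff_eq_inv₀ hq0, mul_self_eq_one_iff]
  exact not_or.mpr ⟨hq1, hqm1⟩

@[simp] lemma qNum_zero (q : ℂ) : qNum q 0 = 0 := by simp [qNum]

lemma qNum_one (hq : q - q⁻¹ ≠ 0) : qNum q 1 = 1 := by simp [qNum, div_self hq]

lemma qNum_succ (hq : q - q⁻¹ ≠ 0) (n : ℕ) : qNum q (n + 1) = q ^ n + q⁻¹ * qNum q n := by
  rw [qNum, qNum, div_eq_iff hq, add_mul, mul_assoc, div_mul_cancel₀ _ hq]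
  ring

lemma pow_mul_qNum_eq_sum (hq0 : q ≠ 0) (hq : q - q⁻¹ ≠ 0) (n : ℕ) :
    q ^ n * qNum q n = ∑ i ∈ Finset.range n, q ^ (2 * i + 1) := by
  induction n with
  | zero => simp
  | succ n ih =>
    rw [Finset.sum_range_succ, ← ih, qNum_succ hq]
    field_simp
    ring

end QNumbers

/-- The skew-symmetrizer `A^(n)` built from elements `r 0, r 1, …` of a `ℂ`-algebra; the matrices
`Asym k R q n` are the case `r = embR k R`. -/
def skewSymmetrizer {B : Type*} [Ring B] [Algebra ℂ B] (r : ℕ → B) (q : ℂ) : ℕ → B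
  | 0 => 1
  | 1 => 1
  | n + 2 => (qNum q (n + 2))⁻¹ • (skewSymmetrizer r q (n + 1) *
      (q ^ (n + 1) • (1 : B) - qNum q (n + 1) • r n) * skewSymmetrizer r q (n + 1))

section SkewSymmetrizer

variable {B : Type*} [Ring B] [Algebra ℂ B] {r : ℕ → B} {q : ℂ} {k n : ℕ} {y : B}

lemma IsSkew.mono {m : ℕ} (hy : IsSkew r q n y) (hmn : m ≤ n) : IsSkew r q m y :=
  fun i hi => hy i (by lia)

lemma commute_skewSymmetrizer {z : B} (hz : ∀ i, i + 1 < n → Commute z (r i)) :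
    Commute z (skewSymmetrizer r q n) := by
  induction n with
  | zero => exact Commute.one_right z
  | succ n ih =>
    have hn := ih fun i hi => hz i (by lia)
    cases n with
    | zero => exact Commute.one_right z
    | succ n =>
      have hfactor : Commute z (q ^ (n + 1) • (1 : B) - qNum q (n + 1) • r n) :=
        ((Commute.one_right z).smul_right _).sub_right ((hz n (by lia)).smul_right _)
      exact ((hn.mul_right hfactor).mul_right hn).smul_right _

lemma IsSkew.skewSymmetrizer_mul (hq : q - q⁻¹ ≠ 0) (hqn : ∀ j, 2 ≤ j → j ≤ n → qNum q j ≠ 0)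
    (hy : IsSkew r q n y) : skewSymmetrizer r q n * y = y := by
  induction n with
  | zero => exact one_mul y
  | succ n ih =>
    cases n with
    | zero => exact one_mul y
    | succ n =>
      have ih' := ih (fun j hj hjn => hqn j hj (by lia)) (hy.mono (by lia))
      have hfactor : (q ^ (n + 1) • (1 : B) - qNum q (n + 1) • r n) * y = qNum q (n + 2) • y := by
        rw [sub_mul, smul_one_mul, smul_mul_assoc, hy n (by lia), smul_smul, ← sub_smul,
          qNum_succ hq (n + 1)]
        congr 1
        ring
      rw [skewSymmetrizer, smul_mul_assoc, mul_assoc, mul_assoc, ih', hfactor, mul_smul_comm, ih',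
        inv_smul_smul₀ (hqn _ (by lia) le_rfl)]

lemma qNum_smul_skewSymmetrizer_add_three (hq : q - q⁻¹ ≠ 0)
    (hqn : ∀ j, 2 ≤ j → j ≤ n + 3 → qNum q j ≠ 0) (hr : IsBraidSequence r k) (hn : n + 3 ≤ k)
    (hskew : IsSkew r q (n + 2) (skewSymmetrizer r q (n + 2))) :
    qNum q (n + 3) • skewSymmetrizer r q (n + 3) =
      q ^ (n + 1) • (q • skewSymmetrizer r q (n + 2) - r (n + 1) * skewSymmetrizer r q (n + 2)) +
      qNum q (n + 1) •
        (skewSymmetrizer r q (n + 1) * (r n * (r (n + 1) * skewSymmetrizer r q (n + 2)))) := by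
  set a := skewSymmetrizer r q (n + 1)
  set b := skewSymmetrizer r q (n + 2) with hb
  have hta : Commute (r (n + 1)) a :=
    commute_skewSymmetrizer fun i hi => (hr.comm i (n + 1) (by lia) (by lia)).symm
  have hab : a * b = b :=
    (hskew.mono (by lia)).skewSymmetrizer_mul hq fun j hj hjn => hqn j hj (by lia)
  have hbb : b * b = b := hskew.skewSymmetrizer_mul hq fun j hj hjn => hqn j hj (by lia)
  have hatb : a * (r (n + 1) * b) = r (n + 1) * b := by rw [← mul_assoc, ← hta.eq, mul_assoc, hab]
  have hb_smul : qNum q (n + 2) • b = a * (q ^ (n + 1) • (1 : B) - qNum q (n + 1) • r n) * a := by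
    rw [hb, skewSymmetrizer, smul_inv_smul₀ (hqn _ (by lia) (by lia))]
  have hbtb : qNum q (n + 2) • (b * (r (n + 1) * b)) =
      q ^ (n + 1) • (r (n + 1) * b) - qNum q (n + 1) • (a * (r n * (r (n + 1) * b))) := by
    rw [← smul_mul_assoc, hb_smul, mul_assoc, hatb]
    simp only [mul_sub, sub_mul, mul_smul_comm, smul_mul_assoc, mul_one, mul_assoc, hatb]
  rw [skewSymmetrizer, smul_inv_smul₀ (hqn _ (by lia) (by lia)), mul_assoc, sub_mul, mul_sub,
    smul_one_mul, mul_smul_comm, hbb, smul_mul_assoc, mul_smul_comm, hbtb]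
  module

lemma mul_smul_sub_mul_of_hecke (hq0 : q ≠ 0) {t : B} (ht : t * t = (q - q⁻¹) • t + 1) (y : B) :
    t * (q • y - t * y) = (-q⁻¹) • (q • y - t * y) := by
  rw [mul_sub, ← mul_assoc, ht, add_mul, one_mul, mul_smul_comm, smul_mul_assoc]
  match_scalars <;> field_simp
  ring

lemma IsSkew.mul (hy : IsSkew r q n y) (z : B) : IsSkew r q n (y * z) :=
  fun i hi => by rw [← mul_assoc, hy i hi, smul_mul_assoc]

lemma IsSkew.smul (hy : IsSkew r q n y) (c : ℂ) : IsSkew r q n (c • y) :=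
  fun i hi => by rw [mul_smul_comm, hy i hi, smul_comm]

lemma skewSymmetrizer_add_two_isSkew_last (hq0 : q ≠ 0) (hq : q - q⁻¹ ≠ 0)
    (hqn : ∀ j, 2 ≤ j → j ≤ n + 2 → qNum q j ≠ 0) (hr : IsBraidSequence r k)
    (hecke : ∀ i, i + 1 < k → r i * r i = (q - q⁻¹) • r i + 1) (hn : n + 2 ≤ k)
    (hskew : IsSkew r q (n + 1) (skewSymmetrizer r q (n + 1))) :
    r n * skewSymmetrizer r q (n + 2) = (-q⁻¹) • skewSymmetrizer r q (n + 2) := by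
  suffices hscaled : r n * (qNum q (n + 2) • skewSymmetrizer r q (n + 2)) =
      (-q⁻¹) • qNum q (n + 2) • skewSymmetrizer r q (n + 2) by
    rw [mul_smul_comm, smul_comm] at hscaled
    exact smul_right_injective B (hqn _ (by lia) le_rfl) hscaled
  cases n with
  | zero =>
    have htwo : qNum q 2 • skewSymmetrizer r q 2 = q • 1 - r 0 * 1 := by
      simp [skewSymmetrizer, qNum_one hq, smul_inv_smul₀ (hqn 2 le_rfl le_rfl)]
    rw [htwo, mul_smul_sub_mul_of_hecke hq0 (hecke 0 (by lia))]
  | succ n =>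
    set a := skewSymmetrizer r q (n + 1)
    set b := skewSymmetrizer r q (n + 2)
    have hta : r (n + 1) * a = a * r (n + 1) :=
      commute_skewSymmetrizer fun i hi => (hr.comm i (n + 1) (by lia) (by lia)).symm
    have hlast : r (n + 1) * (a * (r n * (r (n + 1) * b))) =
        (-q⁻¹) • (a * (r n * (r (n + 1) * b))) :=
      calc r (n + 1) * (a * (r n * (r (n + 1) * b)))
          = a * (r (n + 1) * r n * r (n + 1) * b) := by
            rw [← mul_assoc, hta]; simp only [mul_assoc]
        _ = a * (r n * (r (n + 1) * (r n * b))) := by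
            rw [← hr.braid n hn]; simp only [mul_assoc]
        _ = (-q⁻¹) • (a * (r n * (r (n + 1) * b))) := by
            rw [hskew n (by lia)]; simp only [mul_smul_comm]
    rw [qNum_smul_skewSymmetrizer_add_three hq hqn hr hn hskew, mul_add, mul_smul_comm,
      mul_smul_sub_mul_of_hecke hq0 (hecke (n + 1) (by lia)), mul_smul_comm, hlast]
    module

theorem isSkew_skewSymmetrizer (hq0 : q ≠ 0) (hq : q - q⁻¹ ≠ 0)
    (hqn : ∀ j, 2 ≤ j → j ≤ n → qNum q j ≠ 0) (hr : IsBraidSequence r k)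
    (hecke : ∀ i, i + 1 < k → r i * r i = (q - q⁻¹) • r i + 1) (hn : n ≤ k) :
    IsSkew r q n (skewSymmetrizer r q n) := by
  induction n with
  | zero => exact fun i hi => by lia
  | succ n ih =>
    have hskew := ih (fun j hj hjn => hqn j hj (by lia)) (by lia)
    cases n with
    | zero => exact fun i hi => by lia
    | succ n =>
      intro i hi
      rcases Nat.lt_succ_iff_lt_or_eq.mp hi with hin | hin
      · rw [skewSymmetrizer, mul_assoc]
        exact (hskew.mul _).smul _ i hin
      · obtain rfl : i = n := by lia
        exact skewSymmetrizer_add_two_isSkew_last hq0 hq hqn hr hecke hn hskew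

end SkewSymmetrizer

section TensorEmbed

open scoped Kronecker

variable {ι κ n A : Type*}

/-- Splits a multi-index along the range of `e`, separating the tensor factors hit by `e` from
the others. -/
def splitIndex [Fintype ι] [DecidableEq κ] (e : ι ↪ κ) :
    (κ → n) ≃ (ι → n) × ({j // j ∉ Set.range e} → n) :=
  (Equiv.piEquivPiSubtypeProd (· ∈ Set.range e) fun _ => n).trans
    (Equiv.prodCongr
      (Equiv.arrowCongr (Equiv.ofInjective e e.injective).symm (Equiv.refl n)) (Equiv.refl _))

/-- The tensor power `C ⊗ ⋯ ⊗ C`, with tensor factors indexed by `κ`. -/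
def tensorPower [CommRing A] (κ : Type*) [Fintype κ] (C : Matrix n n A) :
    Matrix (κ → n) (κ → n) A :=
  Matrix.of fun f g => ∏ j, C (f j) (g j)

lemma tensorPower_eq_submatrix [CommRing A] [Fintype ι] [Fintype κ] [DecidableEq κ]
    (e : ι ↪ κ) (C : Matrix n n A) :
    tensorPower κ C = (tensorPower ι C ⊗ₖ tensorPower {j // j ∉ Set.range e} C).submatrix
      (splitIndex e) (splitIndex e) := by
  ext f g
  calc ∏ j, C (f j) (g j)
      = (∏ j : {j // j ∈ Set.range e}, C (f j) (g j)) *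
          ∏ j : {j // j ∉ Set.range e}, C (f j) (g j) := by
        convert
          (Fintype.prod_subtype_mul_prod_subtype (· ∈ Set.range e) fun j => C (f j) (g j)).symm
    _ = (∏ i, C (f (e i)) (g (e i))) * ∏ j : {j // j ∉ Set.range e}, C (f j) (g j) :=
        congrArg (· * _)
          (Fintype.prod_equiv (Equiv.ofInjective e e.injective) _ _ fun _ => rfl).symm

variable [Fintype ι] [DecidableEq ι] [Fintype κ] [DecidableEq κ] [Fintype n] [DecidableEq n]

/-- `tensorEmbed e X` is the operator on the tensor factors `κ` acting as `X` on the factors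
selected by `e` and as the identity on the others. -/
def tensorEmbed [Ring A] (e : ι ↪ κ) :
    Matrix (ι → n) (ι → n) A →+* Matrix (κ → n) (κ → n) A :=
  (Matrix.reindexRingEquiv A (splitIndex e).symm).toRingHom.comp
    ((Matrix.blockDiagonalRingHom _ _ A).comp (Pi.constRingHom _ _))

lemma tensorEmbed_eq_submatrix [Ring A] (e : ι ↪ κ) (X : Matrix (ι → n) (ι → n) A) :
    tensorEmbed e X = (X ⊗ₖ (1 : Matrix _ _ A)).submatrix (splitIndex e) (splitIndex e) := by
  rw [Matrix.kronecker_one]; rfl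

lemma tensorEmbed_apply [Ring A] (e : ι ↪ κ) (X : Matrix (ι → n) (ι → n) A) (f g : κ → n)
    [Decidable (∀ j, j ∉ Set.range e → f j = g j)] :
    tensorEmbed e X f g =
      if ∀ j, j ∉ Set.range e → f j = g j then X (f ∘ e) (g ∘ e) else 0 := by
  rw [tensorEmbed_eq_submatrix, Matrix.kronecker_one, Matrix.submatrix_apply,
    Matrix.blockDiagonal_apply]
  refine if_congr ?_ rfl rfl
  simp [splitIndex, funext_iff]

lemma tensorEmbed_smul [Ring A] {S : Type*} [SMulZeroClass S A] (e : ι ↪ κ) (c : S)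
    (X : Matrix (ι → n) (ι → n) A) : tensorEmbed e (c • X) = c • tensorEmbed e X := by
  ext f g
  simp only [Matrix.smul_apply, tensorEmbed_apply, smul_ite, smul_zero]

lemma tensorEmbed_map [Ring A] {A' : Type*} [Ring A'] (φ : A →+* A') (e : ι ↪ κ)
    (X : Matrix (ι → n) (ι → n) A) : tensorEmbed e (X.map φ) = (tensorEmbed e X).map φ := by
  ext f g
  simp only [Matrix.map_apply, tensorEmbed_apply, apply_ite φ, map_zero]

lemma tensorEmbed_trans [Ring A] {ι' : Type*} [Fintype ι'] [DecidableEq ι'] (e' : ι' ↪ ι)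
    (e : ι ↪ κ) (X : Matrix (ι' → n) (ι' → n) A) :
    tensorEmbed (e'.trans e) X = tensorEmbed e (tensorEmbed e' X) := by
  ext f g
  simp only [tensorEmbed_apply, ← ite_and]
  refine if_congr ⟨fun h => ⟨fun j hj => h j ?_, fun i hi => h (e i) ?_⟩, fun h j hj => ?_⟩ rfl rfl
  · rintro ⟨i, rfl⟩
    exact hj ⟨e' i, rfl⟩
  · rintro ⟨i', hi'⟩
    exact hi ⟨i', e.injective hi'⟩
  · by_cases hje : j ∈ Set.range e
    · obtain ⟨i, rfl⟩ := hje
      exact h.2 i fun ⟨i', hi'⟩ => hj ⟨i', congrArg e hi'⟩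
    · exact h.1 j hje

variable {ι' : Type*} [Fintype ι'] [DecidableEq ι']

lemma tensorEmbed_mul_tensorEmbed_apply [Ring A] {e : ι ↪ κ} {e' : ι' ↪ κ}
    (hdisj : Disjoint (Set.range e) (Set.range e')) (X : Matrix (ι → n) (ι → n) A)
    (Y : Matrix (ι' → n) (ι' → n) A) (f g : κ → n) :
    (tensorEmbed e X * tensorEmbed e' Y) f g =
      if ∀ j, j ∉ Set.range e ∪ Set.range e' → f j = g j then
        X (f ∘ e) (g ∘ e) * Y (f ∘ e') (g ∘ e') else 0 := by
  set mid : κ → n := fun j => if j ∈ Set.range e then g j else f j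
  have hmid_e : mid ∘ e = g ∘ e := funext fun i => if_pos ⟨i, rfl⟩
  have hmid_e' : mid ∘ e' = f ∘ e' :=
    funext fun i => if_neg fun hi => Set.disjoint_left.mp hdisj hi ⟨i, rfl⟩
  simp only [Matrix.mul_apply, tensorEmbed_apply, ite_zero_mul_ite_zero]
  rw [Finset.sum_eq_single mid, hmid_e, hmid_e']
  · refine if_congr ⟨fun h j hj => ?_, fun h => ⟨fun j hj => (if_neg hj).symm, fun j hj => ?_⟩⟩
      rfl rfl
    · rw [Set.mem_union, not_or] at hj
      exact (h.1 j hj.1).trans (h.2 j hj.2)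
    · by_cases hje : j ∈ Set.range e
      · exact if_pos hje
      · exact (if_neg hje).trans (h j (not_or.mpr ⟨hje, hj⟩))
  · refine fun h _ hne => if_neg fun ⟨hf, hg⟩ => hne (funext fun j => ?_)
    by_cases hj : j ∈ Set.range e
    · exact (hg j (Set.disjoint_left.mp hdisj hj)).trans (if_pos hj).symm
    · exact (hf j hj).symm.trans (if_neg hj).symm
  · exact fun hnotMem => absurd (Finset.mem_univ _) hnotMem

lemma commute_tensorEmbed_of_disjoint [Ring A] {e : ι ↪ κ} {e' : ι' ↪ κ}
    (hdisj : Disjoint (Set.range e) (Set.range e')) {X : Matrix (ι → n) (ι → n) A}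
    {Y : Matrix (ι' → n) (ι' → n) A} (hXY : ∀ a b a' b', Commute (X a b) (Y a' b')) :
    Commute (tensorEmbed e X) (tensorEmbed e' Y) := by
  ext f g
  rw [tensorEmbed_mul_tensorEmbed_apply hdisj, tensorEmbed_mul_tensorEmbed_apply hdisj.symm,
    (hXY _ _ _ _).eq]
  simp only [Set.union_comm (Set.range e)]

lemma commute_tensorPower_tensorEmbed [CommRing A] (e : ι ↪ κ) {C : Matrix n n A}
    {X : Matrix (ι → n) (ι → n) A} (hX : Commute (tensorPower ι C) X) :
    Commute (tensorPower κ C) (tensorEmbed e X) := by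
  rw [tensorPower_eq_submatrix e, tensorEmbed_eq_submatrix, Commute, SemiconjBy,
    Matrix.submatrix_mul_equiv, Matrix.submatrix_mul_equiv]
  simp only [← Matrix.mul_kronecker_mul, hX.eq, one_mul, mul_one]

end TensorEmbed

section Windows

variable {m k i : ℕ}

/-- The inclusion of the consecutive tensor factors `i, …, i + m - 1` among `k` factors. -/
def window (i : ℕ) (h : i + m ≤ k) : Fin m ↪ Fin k := (Fin.natAddEmb i).trans (Fin.castLEEmb h)

lemma mem_range_window {h : i + m ≤ k} {j : Fin k} :
    j ∈ Set.range (window i h) ↔ i ≤ j ∧ (j : ℕ) < i + m := by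
  constructor
  · rintro ⟨t, rfl⟩
    simp [window]
  · rintro ⟨hij, hjm⟩
    exact ⟨⟨j - i, by lia⟩, Fin.ext (by simp [window, hij])⟩

lemma disjoint_range_window {m' i' : ℕ} {h : i + m ≤ k} {h' : i' + m' ≤ k} (hii' : i + m ≤ i') :
    Disjoint (Set.range (window i h)) (Set.range (window i' h')) :=
  Set.disjoint_left.mpr fun j hj hj' => by
    rw [mem_range_window] at hj hj'
    lia

lemma window_trans_window {l t : ℕ} (h : i + m ≤ k) (h' : t + l ≤ m) :
    (window t h').trans (window i h) = window (i + t) (by lia : i + t + l ≤ k) :=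
  Function.Embedding.ext fun j => Fin.ext (by simp [window, Nat.add_assoc])

end Windows

section Embeddings

variable {N k m i : ℕ} {A : Type*} [Ring A]

lemma embR_eq_tensorEmbed (R : RMat N) (h : i + 2 ≤ k) :
    embR k R i =
      tensorEmbed (window i h) (R.submatrix (finTwoArrowEquiv (Fin N)) (finTwoArrowEquiv _)) := by
  ext f g
  rw [embR, dif_pos (by lia), tensorEmbed_apply]
  refine if_congr (forall_congr' fun j => ?_) rfl rfl
  rw [mem_range_window, ← and_imp]
  exact imp_congr_left (by lia)

lemma embR_of_le (R : RMat N) (h : k ≤ i + 1) : embR k R i = 1 := by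
  ext f g
  rw [embR, dif_neg (by lia)]

lemma emb1_eq_tensorEmbed (X : Matrix (Fin N) (Fin N) A) (h : 0 + 1 ≤ k) :
    emb1 k X = tensorEmbed (window 0 h)
      (X.submatrix (Equiv.funUnique (Fin 1) (Fin N)) (Equiv.funUnique (Fin 1) _)) := by
  ext f g
  rw [emb1, dif_pos (by lia), tensorEmbed_apply]
  refine if_congr (forall_congr' fun j => ?_) rfl rfl
  rw [mem_range_window]
  exact imp_congr_left (by lia)

lemma tensorEmbed_window_embR (R : RMat N) {t : ℕ} (h : i + m ≤ k) (ht : t + 1 < m) :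
    tensorEmbed (window i h) (embR m R t) = embR k R (i + t) := by
  rw [embR_eq_tensorEmbed R (show t + 2 ≤ m from ht), ← tensorEmbed_trans, window_trans_window,
    ← embR_eq_tensorEmbed]

lemma tensorEmbed_window_emb1 (X : Matrix (Fin N) (Fin N) A) (h : 0 + m ≤ k) (hm : 0 < m) :
    tensorEmbed (window 0 h) (emb1 m X) = emb1 k X := by
  rw [emb1_eq_tensorEmbed X (by lia : 0 + 1 ≤ m), ← tensorEmbed_trans, window_trans_window,
    ← emb1_eq_tensorEmbed]

lemma emb1_mul (X Y : Matrix (Fin N) (Fin N) A) : emb1 k (X * Y) = emb1 k X * emb1 k Y := by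
  cases k with
  | zero =>
    have hone : ∀ Z : Matrix (Fin N) (Fin N) A, emb1 0 Z = 1 := fun Z => rfl
    simp only [hone, mul_one]
  | succ k =>
    have h : 0 + 1 ≤ k + 1 := by lia
    rw [emb1_eq_tensorEmbed _ h, emb1_eq_tensorEmbed _ h, emb1_eq_tensorEmbed _ h, ← map_mul,
      Matrix.submatrix_mul_equiv]

/-- `embR k R i` as a monoid homomorphism in `R`. -/
def embRHom (N k i : ℕ) : RMat N →* TMat N k ℂ where
  toFun R := embR k R i
  map_one' := by
    rcases Nat.lt_or_ge (i + 1) k with h | h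
    · rw [embR_eq_tensorEmbed _ h, Matrix.submatrix_one_equiv, map_one]
    · exact embR_of_le _ h
  map_mul' R S := by
    rcases Nat.lt_or_ge (i + 1) k with h | h
    · simp only [embR_eq_tensorEmbed _ (show i + 2 ≤ k from h), ← map_mul,
        Matrix.submatrix_mul_equiv]
    · simp only [embR_of_le _ h, mul_one]

lemma isBraidSequence_embR {R : RMat N} (hbr : IsBraiding R) (k : ℕ) :
    IsBraidSequence (embR k R) k where
  braid i hi := by
    have hbr' := congrArg (tensorEmbed (window i (by lia : i + 3 ≤ k))) hbr
    simpa only [map_mul, tensorEmbed_window_embR R _ (show 0 + 1 < 3 by lia), add_zero,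
      tensorEmbed_window_embR R _ (show 1 + 1 < 3 by lia)] using hbr'
  comm i j hij hj := by
    rw [embR_eq_tensorEmbed R (by lia : i + 2 ≤ k), embR_eq_tensorEmbed R hj]
    exact commute_tensorEmbed_of_disjoint (disjoint_range_window hij) fun _ _ _ _ =>
      Commute.all _ _

lemma mul_self_of_heckeCond {R : RMat N} {q : ℂ} (hq : q ≠ 0) (hH : HeckeCond R q) :
    R * R = (q - q⁻¹) • R + 1 := by
  have hexpand : (q • (1 : RMat N) - R) * (q⁻¹ • 1 + R) = 1 + (q - q⁻¹) • R - R * R := by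
    simp only [sub_mul, mul_add, smul_one_mul, mul_smul_one]
    match_scalars <;> field_simp
    ring
  rw [HeckeCond, hexpand, sub_eq_zero] at hH
  rw [← hH, add_comm]

lemma embR_mul_self_of_heckeCond {R : RMat N} {q : ℂ} (hq : q ≠ 0) (hH : HeckeCond R q)
    (hi : i + 1 < k) : embR k R i * embR k R i = (q - q⁻¹) • embR k R i + 1 := by
  have h : i + 2 ≤ k := hi
  rw [embR_eq_tensorEmbed R h, ← map_mul, Matrix.submatrix_mul_equiv, mul_self_of_heckeCond hq hH,
    ← tensorEmbed_smul, ← map_one (tensorEmbed (window i h)), ← map_add,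
    ← Matrix.submatrix_one_equiv (finTwoArrowEquiv (Fin N))]
  rfl

lemma Asym_eq_skewSymmetrizer (k : ℕ) (R : RMat N) (q : ℂ) (n : ℕ) :
    Asym k R q n = skewSymmetrizer (embR k R) q n := by
  induction n with
  | zero => rfl
  | succ n ih =>
    cases n with
    | zero => rfl
    | succ n => rw [Asym, skewSymmetrizer, ih]

variable [Algebra ℂ A]

/-- `liftC` as an algebra homomorphism. -/
def liftCHom (A : Type*) [Ring A] [Algebra ℂ A] : TMat N k ℂ →ₐ[ℂ] TMat N k A :=
  (Algebra.ofId ℂ A).mapMatrix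

/-- The invertible matrices `R₁, …, R_{k-1}` with entries in `A`. -/
def embRUnits (A : Type*) [Ring A] [Algebra ℂ A] (k : ℕ) (R : (RMat N)ˣ) (i : ℕ) :
    (TMat N k A)ˣ :=
  Units.map ((liftCHom A : TMat N k ℂ →ₐ[ℂ] TMat N k A) : TMat N k ℂ →* TMat N k A)
    (Units.map (embRHom N k i) R)

lemma copyX_eq_braidCopy (R : (RMat N)ˣ) (X : Matrix (Fin N) (Fin N) A) (k i : ℕ) :
    copyX k ↑R ↑R⁻¹ X i = braidCopy (embRUnits A k R) (emb1 k X) i := by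
  induction i with
  | zero => rfl
  | succ i ih => rw [copyX, ih]; rfl

lemma isBraidSequence_embRUnits {R : (RMat N)ˣ} (hbr : IsBraiding (R : RMat N)) (k : ℕ) :
    IsBraidSequence (embRUnits A k R) k :=
  .of_units_val ((isBraidSequence_embR hbr k).map (liftCHom A))

lemma liftC_embR_eq_tensorEmbed (R : RMat N) (h : i + 2 ≤ k) :
    liftC A (embR k R i) = tensorEmbed (window i h)
      ((R.submatrix (finTwoArrowEquiv (Fin N)) (finTwoArrowEquiv _)).map (algebraMap ℂ A)) := by
  rw [tensorEmbed_map, ← embR_eq_tensorEmbed]; rfl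

lemma isFirstStrand_emb1 (R : (RMat N)ˣ) (k : ℕ) (X : Matrix (Fin N) (Fin N) A) :
    IsFirstStrand (embRUnits A k R) k (emb1 k X) := by
  intro i hi hik
  change Commute (liftC A (embR k ↑R i)) (emb1 k X)
  rw [liftC_embR_eq_tensorEmbed _ hik, emb1_eq_tensorEmbed X (by lia)]
  exact (commute_tensorEmbed_of_disjoint (disjoint_range_window (by lia)) fun _ _ _ _ =>
    Algebra.commute_algebraMap_right _ _).symm

lemma tensorEmbed_window_liftC_embR (R : RMat N) (h : 0 + 2 ≤ k) :
    tensorEmbed (window 0 h) (liftC A (embR 2 R 0)) = liftC A (embR k R 0) := by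
  rw [liftC, tensorEmbed_map, tensorEmbed_window_embR R h (by lia), Nat.zero_add, liftC]

lemma isCapelliPair_emb1 {R : (RMat N)ˣ} {M D : Matrix (Fin N) (Fin N) A}
    (hDD : DDRel (↑R⁻¹ : RMat N) D) (hperm : PermRel (R : RMat N) ↑R⁻¹ M D) (k : ℕ) :
    IsCapelliPair (embRUnits A k R) k (emb1 k M) (emb1 k D) where
  left_isFirstStrand := isFirstStrand_emb1 R k M
  right_isFirstStrand := isFirstStrand_emb1 R k D
  perm_rel hk := by
    have hperm' := congrArg (tensorEmbed (window 0 (by lia : 0 + 2 ≤ k))) hperm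
    simp only [map_mul, map_add, map_one, tensorEmbed_window_liftC_embR,
      tensorEmbed_window_emb1 _ _ (show 0 < 2 by lia)] at hperm'
    exact hperm'
  right_commute hk := by
    have hDD' := congrArg (tensorEmbed (window 0 (by lia : 0 + 2 ≤ k))) hDD
    simp only [map_mul, tensorEmbed_window_liftC_embR,
      tensorEmbed_window_emb1 _ _ (show 0 < 2 by lia)] at hDD'
    have hinv : Commute (((embRUnits A k R 0)⁻¹ : (TMat N k A)ˣ) : TMat N k A)
        (emb1 k D * ↑(embRUnits A k R 0)⁻¹ * emb1 k D) := by
      rw [Commute, SemiconjBy, ← mul_assoc, ← mul_assoc]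
      exact hDD'
    simpa only [braidCopy, ConjAct.units_smul_def, ConjAct.ofConjAct_toConjAct, mul_assoc] using
      (Commute.refl _).mul_right (Commute.units_inv_left_iff.mp hinv)

end Embeddings

section PartialTrace

open scoped Kronecker

variable {ι κ μ S : Type*} [Fintype ι] [CommRing S]

/-- The trace over the first tensor factor of `(w ⊗ 1) X`. -/
def partialTraceLeft (w : Matrix ι ι S) (X : Matrix (ι × κ) (ι × κ) S) : Matrix κ κ S :=
  ∑ i, ∑ a, w a i • X.submatrix (Prod.mk i) (Prod.mk a)

/-- The trace over the last tensor factor of `(1 ⊗ w) X`. -/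
def partialTraceRight (w : Matrix ι ι S) (X : Matrix (κ × ι) (κ × ι) S) : Matrix κ κ S :=
  ∑ i, ∑ a, w a i • X.submatrix (·, i) (·, a)

lemma partialTraceLeft_apply (w : Matrix ι ι S) (X : Matrix (ι × κ) (ι × κ) S) (j b : κ) :
    partialTraceLeft w X j b = ∑ i, ∑ a, w a i * X (i, j) (a, b) := by
  simp only [partialTraceLeft, Matrix.sum_apply, Matrix.smul_apply, Matrix.submatrix_apply,
    smul_eq_mul]

lemma partialTraceRight_apply (w : Matrix ι ι S) (X : Matrix (κ × ι) (κ × ι) S) (j b : κ) :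
    partialTraceRight w X j b = ∑ i, ∑ a, w a i * X (j, i) (b, a) := by
  simp only [partialTraceRight, Matrix.sum_apply, Matrix.smul_apply, Matrix.submatrix_apply,
    smul_eq_mul]

section Bimodule

variable [Fintype κ]

lemma partialTraceLeft_conj [DecidableEq ι] (w : Matrix ι ι S) (u v : Matrix κ κ S)
    (X : Matrix (ι × κ) (ι × κ) S) :
    partialTraceLeft w ((1 ⊗ₖ u) * X * (1 ⊗ₖ v)) = u * partialTraceLeft w X * v := by
  have hblock (i a : ι) : ((1 ⊗ₖ u) * X * (1 ⊗ₖ v)).submatrix (Prod.mk i) (Prod.mk a) =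
      u * X.submatrix (Prod.mk i) (Prod.mk a) * v := by
    ext j b
    simp [Matrix.mul_apply, Fintype.sum_prod_type_right, Matrix.one_apply]
  simp only [partialTraceLeft, hblock, Finset.mul_sum, Finset.sum_mul, mul_smul_comm,
    smul_mul_assoc]

lemma partialTraceRight_conj [DecidableEq ι] (w : Matrix ι ι S) (u v : Matrix κ κ S)
    (X : Matrix (κ × ι) (κ × ι) S) :
    partialTraceRight w ((u ⊗ₖ 1) * X * (v ⊗ₖ 1)) = u * partialTraceRight w X * v := by
  have hblock (i a : ι) : ((u ⊗ₖ 1) * X * (v ⊗ₖ 1)).submatrix (·, i) (·, a) =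
      u * X.submatrix (·, i) (·, a) * v := by
    ext j b
    simp [Matrix.mul_apply, Fintype.sum_prod_type, Matrix.one_apply]
  simp only [partialTraceRight, hblock, Finset.mul_sum, Finset.sum_mul, mul_smul_comm,
    smul_mul_assoc]

end Bimodule

lemma partialTraceLeft_assoc_kronecker (w : Matrix ι ι S) (X : Matrix (ι × κ) (ι × κ) S)
    (Y : Matrix μ μ S) :
    partialTraceLeft w ((X ⊗ₖ Y).submatrix (Equiv.prodAssoc ι κ μ).symm
      (Equiv.prodAssoc ι κ μ).symm) = partialTraceLeft w X ⊗ₖ Y := by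
  ext ⟨j, k⟩ ⟨b, c⟩
  simp [partialTraceLeft_apply, Finset.sum_mul, mul_assoc]

lemma partialTraceRight_assoc_kronecker (w : Matrix ι ι S) (X : Matrix κ κ S)
    (Y : Matrix (μ × ι) (μ × ι) S) :
    partialTraceRight w ((X ⊗ₖ Y).submatrix (Equiv.prodAssoc κ μ ι)
      (Equiv.prodAssoc κ μ ι)) = X ⊗ₖ partialTraceRight w Y := by
  ext ⟨j, k⟩ ⟨b, c⟩
  simp [partialTraceRight_apply, Finset.mul_sum, mul_left_comm]

lemma partialTraceRight_one [DecidableEq ι] [DecidableEq κ] (w : Matrix ι ι S) :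
    partialTraceRight w (1 : Matrix (κ × ι) (κ × ι) S) = w.trace • (1 : Matrix κ κ S) := by
  ext j b
  by_cases hjb : j = b <;> simp [partialTraceRight_apply, Matrix.one_apply, hjb, Matrix.trace]

lemma partialTraceRight_partialTraceLeft [Fintype μ] (w : Matrix ι ι S) (w' : Matrix μ μ S)
    (X : Matrix (ι × κ × μ) (ι × κ × μ) S) :
    partialTraceRight w' (partialTraceLeft w X) =
      partialTraceLeft w (partialTraceRight w' (X.submatrix (Equiv.prodAssoc ι κ μ)
        (Equiv.prodAssoc ι κ μ))) := by
  ext j b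
  simp only [partialTraceRight_apply, partialTraceLeft_apply, Matrix.submatrix_apply,
    Equiv.prodAssoc_apply, Finset.mul_sum, mul_left_comm (w' _ _)]
  rw [Finset.sum_comm_cycle]
  exact Finset.sum_congr rfl fun i _ => Finset.sum_comm_cycle

end PartialTrace

section SkewInverse

open scoped Kronecker

variable {N : ℕ} {R Rinv Ψ : RMat N}

lemma SkewInv.transpose (hΨ : SkewInv R Ψ) : SkewInv Rᵀ Ψᵀ := fun i a c d => by
  have h := hΨ a i d c
  rw [Finset.sum_comm] at h
  simpa only [Matrix.transpose_apply, and_comm, eq_comm] using h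

lemma Cmat_transpose (Ψ : RMat N) : Cmat Ψᵀ = (Cmat Ψ)ᵀ := rfl

lemma SkewInv.partialTraceRight_eq_single (hΨ : SkewInv R Ψ) (p q : Fin N) :
    partialTraceRight (Matrix.of fun b j => Ψ (b, q) (j, p)) R = Matrix.single p q 1 := by
  ext i a
  rw [partialTraceRight_apply, Matrix.single_apply]
  simpa only [Matrix.of_apply, mul_comm, eq_comm] using hΨ i a q p

lemma SkewInv.partialTraceLeft_eq_one (hΨ : SkewInv R Ψ) : partialTraceLeft (Cmat Ψ) R = 1 := by
  set realignedR : Matrix (Fin N × Fin N) (Fin N × Fin N) ℂ :=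
    Matrix.of fun x y => R (x.1, y.1) (x.2, y.2)
  set realignedΨ : Matrix (Fin N × Fin N) (Fin N × Fin N) ℂ :=
    Matrix.of fun x y => Ψ (x.2, y.2) (x.1, y.1)
  have hright : realignedR * realignedΨ = 1 := by
    ext ⟨i, a⟩ ⟨d, c⟩
    simpa [realignedR, realignedΨ, Matrix.mul_apply, Fintype.sum_prod_type, Matrix.one_apply,
      eq_comm] using hΨ i a c d
  ext j b
  calc partialTraceLeft (Cmat Ψ) R j b = ∑ k, (realignedΨ * realignedR) (k, k) (j, b) := by
        simp only [partialTraceLeft_apply, Cmat, Finset.sum_mul, Matrix.mul_apply,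
          Fintype.sum_prod_type, realignedR, realignedΨ, Matrix.of_apply]
        exact Finset.sum_comm_cycle
    _ = (1 : Matrix _ _ ℂ) j b := by
        rw [mul_eq_one_comm.mp hright]
        simp [Matrix.one_apply, ite_and]

lemma IsBraiding.transpose (hbr : IsBraiding R) : IsBraiding Rᵀ := by
  have htranspose (i : ℕ) : embR 3 Rᵀ i = (embR 3 R i)ᵀ := by
    ext f g
    simp [embR, eq_comm, Matrix.one_apply]
  rw [IsBraiding, htranspose, htranspose]
  simpa only [Matrix.transpose_mul, mul_assoc] using congrArg Matrix.transpose hbr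

/-- `X ⊗ 1` on three tensor factors, reassociated so that it can be composed with `1 ⊗ₖ X`. -/
def kroneckerOneAssoc (X : RMat N) : Matrix (Fin N × Fin N × Fin N) (Fin N × Fin N × Fin N) ℂ :=
  (X ⊗ₖ 1).submatrix (Equiv.prodAssoc ..).symm (Equiv.prodAssoc ..).symm

lemma kroneckerOneAssoc_submatrix (X : RMat N) :
    (kroneckerOneAssoc X).submatrix (Equiv.prodAssoc ..) (Equiv.prodAssoc ..) = X ⊗ₖ 1 := rfl

lemma kroneckerOneAssoc_mul_eq_one {X Y : RMat N} (h : X * Y = 1) :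
    kroneckerOneAssoc X * kroneckerOneAssoc Y = 1 := by
  rw [kroneckerOneAssoc, kroneckerOneAssoc, Matrix.submatrix_mul_equiv, ← Matrix.mul_kronecker_mul,
    h, one_mul, Matrix.one_kronecker_one, Matrix.submatrix_one_equiv]

lemma IsBraiding.kroneckerOneAssoc_mul (hbr : IsBraiding R) :
    kroneckerOneAssoc R * (1 ⊗ₖ R) * kroneckerOneAssoc R =
      (1 ⊗ₖ R) * kroneckerOneAssoc R * (1 ⊗ₖ R) := by
  let e : (Fin 3 → Fin N) ≃ Fin N × Fin N × Fin N :=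
    (Fin.consEquiv fun _ => Fin N).symm.trans
      ((Equiv.refl _).prodCongr (finTwoArrowEquiv (Fin N)))
  have h0 : embR 3 R 0 = (kroneckerOneAssoc R).submatrix e e := by
    ext f g
    simp [embR, kroneckerOneAssoc, Fin.forall_fin_succ, Matrix.one_apply, e, Fin.tail]
  have h1 : embR 3 R 1 = ((1 : Matrix (Fin N) (Fin N) ℂ) ⊗ₖ R).submatrix e e := by
    ext f g
    simp [embR, Fin.forall_fin_succ, Matrix.one_apply, e, Fin.tail]
  rw [IsBraiding, h0, h1] at hbr
  simp only [Matrix.submatrix_mul_equiv] at hbr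
  exact (Matrix.reindex e.symm e.symm).injective hbr

lemma IsBraiding.conj_one_kronecker (hbr : IsBraiding R) (hinv : R * Rinv = 1) :
    kroneckerOneAssoc R * (1 ⊗ₖ R) * kroneckerOneAssoc Rinv =
      (1 ⊗ₖ Rinv) * kroneckerOneAssoc R * (1 ⊗ₖ R) := by
  have hb : ((1 : Matrix (Fin N) (Fin N) ℂ) ⊗ₖ Rinv) * (1 ⊗ₖ R) = 1 := by
    rw [← Matrix.mul_kronecker_mul, mul_eq_one_comm.mp hinv, one_mul, Matrix.one_kronecker_one]
  set a := kroneckerOneAssoc R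
  set a' := kroneckerOneAssoc Rinv
  set b := (1 : Matrix (Fin N) (Fin N) ℂ) ⊗ₖ R
  set b' := (1 : Matrix (Fin N) (Fin N) ℂ) ⊗ₖ Rinv
  calc a * b * a' = b' * b * (a * b * a') := by rw [hb, one_mul]
    _ = b' * (b * a * b) * a' := by simp only [mul_assoc]
    _ = b' * (a * b * a) * a' := by rw [hbr.kroneckerOneAssoc_mul]
    _ = b' * a * b * (a * a') := by simp only [mul_assoc]
    _ = b' * a * b := by rw [kroneckerOneAssoc_mul_eq_one hinv, mul_one]

lemma IsBraiding.partialTraceLeft_conj_single (hbr : IsBraiding R) (hinv : R * Rinv = 1)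
    (hΨ : SkewInv R Ψ) (p q : Fin N) :
    partialTraceLeft (Cmat Ψ) (R * (1 ⊗ₖ Matrix.single p q 1) * Rinv) = Cmat Ψ q p • 1 := by
  set w : Matrix (Fin N) (Fin N) ℂ := Matrix.of fun b j => Ψ (b, q) (j, p)
  calc partialTraceLeft (Cmat Ψ) (R * (1 ⊗ₖ Matrix.single p q 1) * Rinv)
      = partialTraceRight w
          (partialTraceLeft (Cmat Ψ)
            (kroneckerOneAssoc R * (1 ⊗ₖ R) * kroneckerOneAssoc Rinv)) := by
        rw [partialTraceRight_partialTraceLeft,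
          ← Matrix.submatrix_mul_equiv _ _ _ (Equiv.prodAssoc ..),
          ← Matrix.submatrix_mul_equiv _ _ _ (Equiv.prodAssoc ..), kroneckerOneAssoc_submatrix,
          kroneckerOneAssoc_submatrix, partialTraceRight_conj, partialTraceRight_assoc_kronecker,
          hΨ.partialTraceRight_eq_single]
    _ = partialTraceRight w
          (partialTraceLeft (Cmat Ψ) ((1 ⊗ₖ Rinv) * kroneckerOneAssoc R * (1 ⊗ₖ R))) := by
        rw [hbr.conj_one_kronecker hinv]
    _ = partialTraceRight w (1 : RMat N) := by
        rw [partialTraceLeft_conj, kroneckerOneAssoc, partialTraceLeft_assoc_kronecker,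
          hΨ.partialTraceLeft_eq_one, Matrix.one_kronecker_one, mul_one, mul_eq_one_comm.mp hinv]
    _ = Cmat Ψ q p • 1 := partialTraceRight_one w

lemma IsBraiding.Cmat_kronecker_one_mul (hbr : IsBraiding R) (hinv : R * Rinv = 1)
    (hΨ : SkewInv R Ψ) :
    (Cmat Ψ ⊗ₖ 1) * Ψ = Rinv.submatrix Prod.swap Prod.swap * (1 ⊗ₖ Cmat Ψ) := by
  ext ⟨q, t⟩ ⟨b, w⟩
  have htrace (j p : Fin N) :
      partialTraceLeft (Cmat Ψ) (R * (1 ⊗ₖ Matrix.single p q 1) * Rinv) j b =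
        ∑ i, ∑ a, ∑ x, Cmat Ψ a i * (R (i, j) (x, p) * Rinv (x, q) (a, b)) := by
    simp [partialTraceLeft_apply, Matrix.mul_apply, Fintype.sum_prod_type, Matrix.one_apply,
      Matrix.single_apply, Finset.mul_sum, ite_and]
  calc ((Cmat Ψ ⊗ₖ 1) * Ψ : RMat N) (q, t) (b, w) = ∑ p, Cmat Ψ q p * Ψ (p, t) (b, w) := by
        simp [Matrix.mul_apply, Fintype.sum_prod_type, Matrix.one_apply]
    _ = ∑ j, ∑ p, Ψ (p, t) (j, w) *
          partialTraceLeft (Cmat Ψ) (R * (1 ⊗ₖ Matrix.single p q 1) * Rinv) j b := by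
        simp [hbr.partialTraceLeft_conj_single hinv hΨ, Matrix.one_apply, mul_comm]
    _ = ∑ i, ∑ a, ∑ x, Cmat Ψ a i * Rinv (x, q) (a, b) *
          ∑ j, ∑ p, R (i, j) (x, p) * Ψ (p, t) (j, w) := by
        simp only [htrace, Finset.mul_sum]
        rw [Finset.sum_comm_cycle]
        refine Finset.sum_congr rfl fun i _ => ?_
        rw [Finset.sum_comm_cycle]
        refine Finset.sum_congr rfl fun a _ => ?_
        rw [Finset.sum_comm_cycle]
        refine Finset.sum_congr rfl fun x _ => Finset.sum_congr rfl fun j _ =>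
          Finset.sum_congr rfl fun p _ => ?_
        ring
    _ = ∑ a, Cmat Ψ a w * Rinv (t, q) (a, b) := by
        simp [fun i x => hΨ i x t w, ite_and]
    _ = (Rinv.submatrix Prod.swap Prod.swap * (1 ⊗ₖ Cmat Ψ) : RMat N) (q, t) (b, w) := by
        simp [Matrix.mul_apply, Fintype.sum_prod_type, Matrix.one_apply, mul_comm]

lemma IsBraiding.mul_Cmat_kronecker_one (hbr : IsBraiding R) (hinv : R * Rinv = 1)
    (hΨ : SkewInv R Ψ) :
    Ψ * (Cmat Ψ ⊗ₖ 1) = (1 ⊗ₖ Cmat Ψ) * Rinv.submatrix Prod.swap Prod.swap := by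
  have hinvT : Rᵀ * Rinvᵀ = 1 := by
    rw [← Matrix.transpose_mul, mul_eq_one_comm.mp hinv, Matrix.transpose_one]
  have htranspose := congrArg Matrix.transpose
    (hbr.transpose.Cmat_kronecker_one_mul hinvT hΨ.transpose)
  simpa only [Cmat_transpose, Matrix.transpose_mul, Matrix.transpose_submatrix,
    ← Matrix.kroneckerMap_transpose, Matrix.transpose_transpose, Matrix.transpose_one]
    using htranspose

theorem IsBraiding.commute_Cmat_kronecker_Cmat (hbr : IsBraiding R) (hinv : R * Rinv = 1)
    (hΨ : SkewInv R Ψ) : Commute (Cmat Ψ ⊗ₖ Cmat Ψ) R := by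
  set C := Cmat Ψ
  set S := Rinv.submatrix Prod.swap Prod.swap with hS
  have hleft : (C ⊗ₖ 1) * (1 ⊗ₖ C) = C ⊗ₖ C := by
    rw [← Matrix.mul_kronecker_mul, mul_one, one_mul]
  have hright : (1 ⊗ₖ C) * (C ⊗ₖ 1) = C ⊗ₖ C := by
    rw [← Matrix.mul_kronecker_mul, mul_one, one_mul]
  have hcommS : S * (C ⊗ₖ C) = (C ⊗ₖ C) * S :=
    calc S * (C ⊗ₖ C) = (C ⊗ₖ 1) * (Ψ * (C ⊗ₖ 1)) := by
          rw [← hright, ← mul_assoc, ← hbr.Cmat_kronecker_one_mul hinv hΨ, mul_assoc]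
      _ = (C ⊗ₖ C) * S := by
          rw [hbr.mul_Cmat_kronecker_one hinv hΨ, ← mul_assoc, hleft]
  have hswap : (C ⊗ₖ C).submatrix Prod.swap Prod.swap = C ⊗ₖ C := by
    ext
    simp [mul_comm]
  have hcommRinv : (C ⊗ₖ C) * Rinv = Rinv * (C ⊗ₖ C) := by
    have h := congrArg (·.submatrix (Equiv.prodComm ..) (Equiv.prodComm ..)) hcommS.symm
    simp only [← Matrix.submatrix_mul_equiv _ _ _ (Equiv.prodComm (Fin N) (Fin N))] at h
    simpa only [hS, Equiv.coe_prodComm, hswap, Matrix.submatrix_submatrix, Prod.swap_swap_eq,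
      Matrix.submatrix_id_id] using h
  have hu : Commute (C ⊗ₖ C) ↑(Units.mk R Rinv hinv (mul_eq_one_comm.mp hinv))⁻¹ := hcommRinv
  exact Commute.units_inv_right_iff.mp hu

end SkewInverse

section RTrace

open scoped Kronecker

variable {N k : ℕ} {R Rinv Ψ : RMat N}

lemma commute_tensorPower_embR (hbr : IsBraiding R) (hinv : R * Rinv = 1) (hΨ : SkewInv R Ψ)
    (k i : ℕ) : Commute (tensorPower (Fin k) (Cmat Ψ)) (embR k R i) := by
  rcases Nat.lt_or_ge (i + 1) k with h | h
  · have htwo : tensorPower (Fin 2) (Cmat Ψ) = (Cmat Ψ ⊗ₖ Cmat Ψ).submatrix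
        (finTwoArrowEquiv (Fin N)) (finTwoArrowEquiv (Fin N)) := by
      ext f g
      exact Fin.prod_univ_two fun j => Cmat Ψ (f j) (g j)
    rw [embR_eq_tensorEmbed R h]
    apply commute_tensorPower_tensorEmbed
    rw [htwo, Commute, SemiconjBy, Matrix.submatrix_mul_equiv, Matrix.submatrix_mul_equiv,
      hbr.commute_Cmat_kronecker_Cmat hinv hΨ]
  · rw [embR_of_le R h]
    exact Commute.one_right _

variable {A : Type*} [Ring A] [Algebra ℂ A]

lemma rTr_eq_trace (C : Matrix (Fin N) (Fin N) ℂ) (X : TMat N k A) :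
    rTr C X = (liftC A (tensorPower (Fin k) C) * X).trace := by
  simp only [rTr, Matrix.trace, Matrix.diag, Matrix.mul_apply, liftC, Matrix.map_apply,
    tensorPower, Matrix.of_apply, Algebra.smul_def]

lemma trace_liftC_mul_comm (Y : TMat N k ℂ) (X : TMat N k A) :
    (liftC A Y * X).trace = (X * liftC A Y).trace := by
  simp only [Matrix.trace, Matrix.diag, Matrix.mul_apply, liftC, Matrix.map_apply]
  rw [Finset.sum_comm]
  simp only [(Algebra.commutes _ _ : _ = _)]

lemma rTr_liftC_mul_comm {C : Matrix (Fin N) (Fin N) ℂ} {Y : TMat N k ℂ}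
    (hCY : Commute (tensorPower (Fin k) C) Y) (X : TMat N k A) :
    rTr C (liftC A Y * X) = rTr C (X * liftC A Y) := by
  have hlift : liftC A (tensorPower (Fin k) C) * liftC A Y =
      liftC A Y * liftC A (tensorPower (Fin k) C) := hCY.map (liftCHom A)
  rw [rTr_eq_trace, rTr_eq_trace, ← mul_assoc, hlift, mul_assoc, trace_liftC_mul_comm, mul_assoc]

lemma rTr_smul (C : Matrix (Fin N) (Fin N) ℂ) (c : ℂ) (X : TMat N k A) :
    rTr C (c • X) = c • rTr C X := by
  rw [rTr_eq_trace, rTr_eq_trace, mul_smul_comm, Matrix.trace_smul]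

end RTrace

section CapelliIdentity

variable {N : ℕ} {A : Type*} [Ring A] [Algebra ℂ A]

lemma upChain_eq_ascProd (R : (RMat N)ˣ) (X : Matrix (Fin N) (Fin N) A) (k n : ℕ) :
    upChain k ↑R ↑R⁻¹ X n = ascProd (braidCopy (embRUnits A k R) (emb1 k X)) n := by
  rw [upChain, ascProd, funext (copyX_eq_braidCopy R X k)]

lemma downChain_eq_descProd (R : (RMat N)ˣ) (X : Matrix (Fin N) (Fin N) A) (k n : ℕ) :
    downChain k ↑R ↑R⁻¹ X n = descProd (braidCopy (embRUnits A k R) (emb1 k X)) n := by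
  rw [downChain, descProd, funext (copyX_eq_braidCopy R X k)]

lemma capChainA_eq_ascProd {q : ℂ} (hq0 : q ≠ 0) (hq : q - q⁻¹ ≠ 0) (R : (RMat N)ˣ)
    (L : Matrix (Fin N) (Fin N) A) (k n : ℕ) :
    capChainA k ↑R ↑R⁻¹ q L n = ascProd (fun i => braidCopy (embRUnits A k R) (emb1 k L) i +
      (∑ j ∈ Finset.range i, q ^ (2 * j + 1)) • 1) n := by
  simp only [capChainA, ascProd, copyX_eq_braidCopy, pow_mul_qNum_eq_sum hq0 hq]

lemma isSkew_liftC_Asym {R : (RMat N)ˣ} {q : ℂ} {k : ℕ} (hq0 : q ≠ 0) (hq : q - q⁻¹ ≠ 0)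
    (hqk : ∀ j, 2 ≤ j → j ≤ k → qNum q j ≠ 0) (hbr : IsBraiding (R : RMat N))
    (hH : HeckeCond (R : RMat N) q) :
    IsSkew (fun i => (embRUnits A k R i : TMat N k A)) q k (liftC A (Asym k ↑R q k)) := by
  intro i hi
  have hskew := isSkew_skewSymmetrizer hq0 hq hqk (isBraidSequence_embR hbr k)
    (fun i hi => embR_mul_self_of_heckeCond hq0 hH hi) le_rfl i hi
  rw [← Asym_eq_skewSymmetrizer] at hskew
  have hlift := congrArg (liftCHom A) hskew
  rwa [map_mul, map_smul] at hlift

theorem capChainA_mul_Asym {R : (RMat N)ˣ} {q : ℂ} {k : ℕ} {M D : Matrix (Fin N) (Fin N) A}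
    (hq0 : q ≠ 0) (hq : q - q⁻¹ ≠ 0) (hqk : ∀ j, 2 ≤ j → j ≤ k → qNum q j ≠ 0)
    (hbr : IsBraiding (R : RMat N)) (hH : HeckeCond (R : RMat N) q)
    (hDD : DDRel (↑R⁻¹ : RMat N) D) (hperm : PermRel (R : RMat N) ↑R⁻¹ M D) :
    capChainA k ↑R ↑R⁻¹ q (M * D) k * liftC A (Asym k ↑R q k) =
      q ^ (k * (k - 1)) •
        (upChain k ↑R ↑R⁻¹ M k * downChain k ↑R ↑R⁻¹ D k * liftC A (Asym k ↑R q k)) := by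
  rw [capChainA_eq_ascProd hq0 hq, upChain_eq_ascProd, downChain_eq_descProd, emb1_mul]
  exact capelli_mul_of_isSkew hq0 (isBraidSequence_embRUnits hbr k)
    (isCapelliPair_emb1 hDD hperm k) le_rfl (isSkew_liftC_Asym hq0 hq hqk hbr hH)

theorem statement4_general (R Rinv Ψ : RMat N) (q : ℂ)
    (hq0 : q ≠ 0) (hq1 : q ≠ 1) (hqm1 : q ≠ -1) (hinv : R * Rinv = 1)
    (hbr : IsBraiding R) (hH : HeckeCond R q) (hΨ : SkewInv R Ψ) (M D : Matrix (Fin N) (Fin N) A)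
    (hDD : DDRel Rinv D) (hperm : PermRel R Rinv M D) (k : ℕ)
    (hqk : ∀ j, 2 ≤ j → j ≤ k → qNum q j ≠ 0) :
    rTr (Cmat Ψ) (liftC A (Asym k R q k) * capChainA k R Rinv q (M * D) k) =
      q ^ (k * (k - 1)) •
        rTr (Cmat Ψ) (liftC A (Asym k R q k) * upChain k R Rinv M k * downChain k R Rinv D k) := by
  have hcomm : Commute (tensorPower (Fin k) (Cmat Ψ)) (Asym k R q k) := by
    rw [Asym_eq_skewSymmetrizer]
    exact commute_skewSymmetrizer fun i _ => commute_tensorPower_embR hbr hinv hΨ k i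
  have hcapelli : capChainA k R Rinv q (M * D) k * liftC A (Asym k R q k) =
      q ^ (k * (k - 1)) •
        (upChain k R Rinv M k * downChain k R Rinv D k * liftC A (Asym k R q k)) := by
    obtain ⟨R, rfl, rfl⟩ : ∃ u : (RMat N)ˣ, ↑u = R ∧ ↑u⁻¹ = Rinv :=
      ⟨⟨R, Rinv, hinv, mul_eq_one_comm.mp hinv⟩, rfl, rfl⟩
    exact capChainA_mul_Asym hq0 (sub_inv_ne_zero_of_ne_one hq0 hq1 hqm1) hqk hbr hH hDD hperm
  rw [mul_assoc, rTr_liftC_mul_comm hcomm, hcapelli, rTr_smul, rTr_liftC_mul_comm hcomm]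

end CapelliIdentity

/-- generalized quantum Capelli identity, skew-symmetric form:
`⟨A^(k) L_{1̄}(L_{2̄}+qI)⋯(L_{k̄}+q^{k−1}(k−1)_q I)⟩_{1…k}
  = q^{k(k−1)} ⟨A^(k) M_{1̄}⋯M_{k̄} D_{k̄}⋯D_{1̄}⟩_{1…k}`, with `L = MD`. -/
theorem statement4 {N : ℕ} (R Rinv Ψ : RMat N) (q : ℂ)
    (hq0 : q ≠ 0) (hq1 : q ≠ 1) (hqm1 : q ≠ -1)
    (hinv : R * Rinv = 1) (hinv' : Rinv * R = 1)
    (hbr : IsBraiding R) (hH : HeckeCond R q) (hΨ : SkewInv R Ψ)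
    {A : Type _} [Ring A] [Algebra ℂ A]
    (M D : Matrix (Fin N) (Fin N) A)
    (hRE : RERel R M) (hDD : DDRel Rinv D) (hperm : PermRel R Rinv M D) :
    ∀ k : ℕ, 1 ≤ k → (∀ j : ℕ, 2 ≤ j → j ≤ k → qNum q j ≠ 0) →
      rTr (Cmat Ψ) (liftC A (Asym k R q k) * capChainA k R Rinv q (M * D) k)
        = (q ^ (k * (k - 1))) •
            rTr (Cmat Ψ)
              (liftC A (Asym k R q k) * upChain k R Rinv M k * downChain k R Rinv D k) := by
  exact fun k _ hqk =>
    statement4_general R Rinv Ψ q hq0 hq1 hqm1 hinv hbr hH hΨ M D hDD hperm k hqk
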